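/- arXiv:2209.12187 — 2 statements merged into one kernel-verified Lean document; each statement's English description precedes it below -/
import Mathlib

section
/- Let Ω ⊆ ℂ be a nonempty open connected set and let φ be a nonconstant analytic function on Ω whose image φ(Ω) meets the unit circle 𝕋 = {z ∈ ℂ : |z| = 1}. Then the set {λ ∈ Ω : φ(λ) is a root of unity}, i.e. {λ ∈ Ω : φ(λ)^n = 1 for some integer n ≥ 1}, has a limit point in Ω. -/
open Filter

/-!
The torsion of the unit circle is the image of `ℚ / ℤ`, hence dense; as the circle has no isolated
points, the roots of unity accumulate at every unimodular number. A nonconstant analytic function is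
open, so it pulls accumulation at `φ z` back to accumulation at `z`: in fact *every* point of `Ω`
mapped to the circle is a limit point.
-/

open Set Topology

theorem accPt_of_dense {X : Type*} [TopologicalSpace X] [T1Space X] {s : Set X}
    (hs : Dense s) (x : X) [NeBot (𝓝[≠] x)] : AccPt x (𝓟 s) := by
  rw [accPt_principal_iff_clusterPt, ← mem_closure_iff_clusterPt]
  exact hs.sdiff_singleton x x

theorem accPt_comap_of_nhds_le_map {X Y : Type*} [TopologicalSpace X] [TopologicalSpace Y]
    {f : X → Y} {x : X} {l : Filter Y} (hf : 𝓝 (f x) ≤ map f (𝓝 x)) (h : AccPt (f x) l) :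
    AccPt x (comap f l) := by
  have hf_ne : 𝓝[≠] (f x) ≤ map f (𝓝[≠] x) := calc
    𝓝[≠] (f x) ≤ map f (𝓝 x) ⊓ 𝓟 {f x}ᶜ := inf_le_inf_right _ hf
    _ = map f (𝓝 x ⊓ 𝓟 (f ⁻¹' {f x}ᶜ)) := by rw [← comap_principal, Filter.push_pull]
    _ ≤ map f (𝓝[≠] x) := map_mono <| inf_le_inf_left _ <| principal_mono.2 fun _ ↦ mt (congrArg f)
  rw [AccPt, ← map_neBot_iff f, Filter.push_pull]
  exact NeBot.mono h (inf_le_inf_right l hf_ne)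

theorem dense_setOf_isOfFinAddOrder_addCircle {𝕜 : Type*} [Field 𝕜] [LinearOrder 𝕜]
    [IsStrictOrderedRing 𝕜] [Archimedean 𝕜] [TopologicalSpace 𝕜] [OrderTopology 𝕜]
    (p : 𝕜) [Fact (0 < p)] : Dense {u : AddCircle p | IsOfFinAddOrder u} := by
  have hp : p ≠ 0 := (Fact.out : 0 < p).ne'
  have hsurj : Function.Surjective fun x : 𝕜 ↦ ((x * p : 𝕜) : AddCircle p) :=
    QuotientAddGroup.mk_surjective.comp (mul_right_surjective₀ hp)
  have hdense : DenseRange fun q : ℚ ↦ ((q * p : 𝕜) : AddCircle p) :=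
    hsurj.denseRange.comp Rat.denseRange_cast (by fun_prop)
  refine hdense.mono (range_subset_iff.2 fun q ↦ ?_)
  exact AddCircle.isOfFinAddOrder_iff_exists_rat_eq_div.2 ⟨q, (mul_div_cancel_right₀ _ hp).symm⟩

theorem dense_setOf_isOfFinOrder_circle : Dense {z : Circle | IsOfFinOrder z} := by
  let e := AddCircle.homeomorphCircle one_ne_zero
  refine (e.surjective.denseRange.dense_image e.continuous
    (dense_setOf_isOfFinAddOrder_addCircle 1)).mono ?_
  rintro _ ⟨u, hu, rfl⟩
  obtain ⟨n, hn, hnu⟩ := isOfFinAddOrder_iff_nsmul_eq_zero.1 hu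
  refine isOfFinOrder_iff_pow_eq_one.2 ⟨n, hn, ?_⟩
  rw [AddCircle.homeomorphCircle_apply, ← AddCircle.toCircle_nsmul, hnu, AddCircle.toCircle_zero]

theorem accPt_setOf_isOfFinOrder_of_norm_eq_one {w : ℂ} (hw : ‖w‖ = 1) :
    AccPt w (𝓟 {z : ℂ | IsOfFinOrder z}) := by
  obtain ⟨w, rfl⟩ : ∃ u : Circle, (u : ℂ) = w := ⟨⟨w, mem_sphere_zero_iff_norm.2 hw⟩, rfl⟩
  have : Nontrivial Circle := ⟨-1, 1, Circle.neg_ne_self 1⟩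
  have hcoe : AccPt (w : ℂ) (map Circle.coeHom (𝓟 {z : Circle | IsOfFinOrder z})) :=
    (accPt_of_dense dense_setOf_isOfFinOrder_circle w).map
      continuous_subtype_val.continuousAt Circle.coe_injective
  exact hcoe.mono (tendsto_principal_principal.2 fun _ ↦ Circle.coeHom.isOfFinOrder)

section OpenMapping

variable {E : Type*} [NormedAddCommGroup E] [NormedSpace ℂ E] {U : Set E} {g : E → ℂ} {z : E}

theorem nhds_le_map_nhds_of_analyticOnNhd (hg : AnalyticOnNhd ℂ g U) (hU : IsPreconnected U)
    (hnc : ∃ x ∈ U, ∃ y ∈ U, g x ≠ g y) (hz : z ∈ U) : 𝓝 (g z) ≤ map g (𝓝 z) := by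
  refine (hg z hz).eventually_constant_or_nhds_le_map_nhds.resolve_left fun hconst ↦ ?_
  have heq : EqOn g (fun _ ↦ g z) U :=
    hg.eqOn_of_preconnected_of_eventuallyEq analyticOnNhd_const hU hz hconst
  obtain ⟨x, hx, y, hy, hxy⟩ := hnc
  exact hxy ((heq hx).trans (heq hy).symm)

theorem stmt9_general (hUo : IsOpen U) (hU : IsPreconnected U) (hg : AnalyticOnNhd ℂ g U)
    (hnc : ∃ x ∈ U, ∃ y ∈ U, g x ≠ g y) (hz : z ∈ U) (hgz : ‖g z‖ = 1) :
    AccPt z (𝓟 {x ∈ U | IsOfFinOrder (g x)}) := by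
  have hpre : AccPt z (comap g (𝓟 {w | IsOfFinOrder w})) :=
    accPt_comap_of_nhds_le_map (nhds_le_map_nhds_of_analyticOnNhd hg hU hnc hz)
      (accPt_setOf_isOfFinOrder_of_norm_eq_one hgz)
  rw [comap_principal] at hpre
  exact hpre.nhds_inter (hUo.mem_nhds hz)

end OpenMapping

theorem stmt9
    (Ω : Set ℂ) (hΩopen : IsOpen Ω) (hΩconn : IsConnected Ω)
    (φ : ℂ → ℂ) (hφa : DifferentiableOn ℂ φ Ω)
    (hφnc : ∃ z ∈ Ω, ∃ w ∈ Ω, φ z ≠ φ w)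
    (hφT : ∃ z ∈ Ω, ‖φ z‖ = 1) :
    ∃ z ∈ Ω, AccPt z (Filter.principal {lam ∈ Ω | ∃ n : ℕ, 1 ≤ n ∧ φ lam ^ n = 1}) := by
  obtain ⟨z, hz, hφz⟩ := hφT
  simp only [Order.one_le_iff_pos, ← isOfFinOrder_iff_pow_eq_one]
  exact ⟨z, hz, stmt9_general hΩopen hΩconn.isPreconnected (hφa.analyticOnNhd hΩopen) hφnc hz hφz⟩
end

section
/- (Godefroy–Shapiro criterion, mixing part.) Let T be a continuous linear operator on a separable Banach space X over the field 𝕂 (= ℝ or ℂ). Suppose that the linear span X₀ of {x ∈ X : Tx = λx for some scalar λ ∈ 𝕂 with |λ| < 1} and the linear span Y₀ of {x ∈ X : Tx = λx for some scalar λ ∈ 𝕂 with |λ| > 1} are both dense in X. Then T is mixing, and in particular hypercyclic. -/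
/-- `T` is hypercyclic if some point has dense orbit. -/
def Hypercyclic {Y : Type*} [TopologicalSpace Y] (T : Y → Y) : Prop :=
  ∃ x : Y, Dense (Set.range fun n : ℕ => T^[n] x)

/-- `T` is topologically transitive if every pair of nonempty open sets is connected by
some iterate of `T`. -/
def TopologicallyTransitive {Y : Type*} [TopologicalSpace Y] (T : Y → Y) : Prop :=
  ∀ U V : Set Y, IsOpen U → IsOpen V → U.Nonempty → V.Nonempty →
    ∃ n : ℕ, (T^[n] '' U ∩ V).Nonempty

/-- `T` is mixing if for every pair of nonempty open sets `U, V` there is `N` such that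
`T^[n] '' U` meets `V` for all `n ≥ N`. -/
def IsMixing {Y : Type*} [TopologicalSpace Y] (T : Y → Y) : Prop :=
  ∀ U V : Set Y, IsOpen U → IsOpen V → U.Nonempty → V.Nonempty →
    ∃ N : ℕ, ∀ n ≥ N, (T^[n] '' U ∩ V).Nonempty

/-- `T` is chaotic if it is topologically transitive and has a dense set of periodic points. -/
def Chaotic {Y : Type*} [TopologicalSpace Y] (T : Y → Y) : Prop :=
  TopologicallyTransitive T ∧ Dense {x : Y | ∃ n : ℕ, 1 ≤ n ∧ T^[n] x = x}

/-!
Eigenvectors for `|λ| < 1` have forward orbits tending to `0`; an eigenvector `y` for `|λ| > 1` has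
the preimages `λ⁻ⁿ y` under `Tⁿ`, which also tend to `0`. Both properties pass to linear
combinations. If `x` has the first property and `y` the second, with preimages `uₙ`, then `x + uₙ`
is close to `x` while `Tⁿ (x + uₙ) = Tⁿ x + y` is close to `y`, for every large `n`: this is mixing.
Hypercyclicity then follows from Baire's theorem, since a point has dense orbit if and only if it
lies in the open dense set `⋃ₙ T⁻ⁿ V` for each nonempty `V` in a countable basis.
-/

open Filter Topology

section Transitivity

variable {Y : Type*} [TopologicalSpace Y] {T : Y → Y}

theorem IsMixing.topologicallyTransitive (hT : IsMixing T) : TopologicallyTransitive T := by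
  intro U V hU hV hUne hVne
  obtain ⟨N, hN⟩ := hT U V hU hV hUne hVne
  exact ⟨N, hN N le_rfl⟩

theorem TopologicallyTransitive.dense_iUnion_preimage_iterate (hT : TopologicallyTransitive T)
    {V : Set Y} (hV : IsOpen V) (hVne : V.Nonempty) : Dense (⋃ n : ℕ, T^[n] ⁻¹' V) := by
  rw [dense_iff_inter_open]
  intro U hU hUne
  obtain ⟨n, _, ⟨x, hxU, rfl⟩, hxV⟩ := hT U V hU hV hUne hVne
  exact ⟨x, hxU, Set.mem_iUnion.2 ⟨n, hxV⟩⟩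

theorem TopologicallyTransitive.hypercyclic [BaireSpace Y] [Nonempty Y]
    [SecondCountableTopology Y] (hT : TopologicallyTransitive T) (hcont : Continuous T) :
    Hypercyclic T := by
  have isBasis := TopologicalSpace.isBasis_countableBasis Y
  have dense_visiting_all :
      Dense (⋂ V ∈ TopologicalSpace.countableBasis Y, ⋃ n : ℕ, T^[n] ⁻¹' V) :=
    dense_biInter_of_isOpen
      (fun _ hV ↦ isOpen_iUnion fun n ↦ (isBasis.isOpen hV).preimage (hcont.iterate n))
      (TopologicalSpace.countable_countableBasis Y)
      (fun _ hV ↦ hT.dense_iUnion_preimage_iterate (isBasis.isOpen hV)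
        (TopologicalSpace.nonempty_of_mem_countableBasis hV))
  obtain ⟨x, hx⟩ := dense_visiting_all.nonempty
  refine ⟨x, isBasis.dense_iff.2 fun V hV _ ↦ ?_⟩
  obtain ⟨n, hn⟩ := Set.mem_iUnion.1 (Set.mem_iInter₂.1 hx V hV)
  exact ⟨T^[n] x, hn, n, rfl⟩

end Transitivity

section Kitai

variable {R X : Type*} [Semiring R] [AddCommMonoid X] [Module R X] [TopologicalSpace X]
  [ContinuousAdd X] [ContinuousConstSMul R X]

/-- The vectors whose forward orbit under `T` tends to `0`: the stable subspace of `T` at `0`. -/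
def stableSubmodule (T : Module.End R X) : Submodule R X where
  carrier := {x | Tendsto (fun n : ℕ ↦ (T ^ n) x) atTop (𝓝 0)}
  add_mem' hx hy := by simpa using hx.add hy
  zero_mem' := by simp [tendsto_const_nhds]
  smul_mem' a x hx := by simpa using hx.const_smul a

/-- The vectors with preimages under `T ^ n` tending to `0` as `n → ∞`, an analogue of the unstable
subspace of `T` at `0`. The preimages are not required to form a backward orbit, that is,
`u (n + 1)` need not be mapped to `u n`. -/
def unstableSubmodule (T : Module.End R X) : Submodule R X where
  carrier := {y | ∃ u : ℕ → X, Tendsto u atTop (𝓝 0) ∧ ∀ n, (T ^ n) (u n) = y}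
  add_mem' := by
    rintro y z ⟨u, hu, hTu⟩ ⟨v, hv, hTv⟩
    exact ⟨fun n ↦ u n + v n, by simpa using hu.add hv, fun n ↦ by rw [map_add, hTu, hTv]⟩
  zero_mem' := ⟨fun _ ↦ 0, tendsto_const_nhds, fun _ ↦ map_zero _⟩
  smul_mem' := by
    rintro a y ⟨u, hu, hTu⟩
    exact ⟨fun n ↦ a • u n, by simpa using hu.const_smul a, fun n ↦ by rw [map_smul, hTu]⟩

theorem isMixing_of_dense_stableSubmodule_of_dense_unstableSubmodule {T : Module.End R X}
    (hstable : Dense (stableSubmodule T : Set X))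
    (hunstable : Dense (unstableSubmodule T : Set X)) : IsMixing T := by
  intro U V hU hV hUne hVne
  obtain ⟨x, hxU, hx⟩ := hstable.inter_open_nonempty U hU hUne
  obtain ⟨y, hyV, u, hu, hTu⟩ := hunstable.inter_open_nonempty V hV hVne
  have start_tendsto : Tendsto (fun n ↦ x + u n) atTop (𝓝 x) := by
    simpa using hu.const_add x
  have end_tendsto : Tendsto (fun n ↦ (T ^ n) (x + u n)) atTop (𝓝 y) := by
    simpa [hTu] using Tendsto.add_const y hx
  obtain ⟨N, hN⟩ := eventually_atTop.1
    ((start_tendsto.eventually_mem (hU.mem_nhds hxU)).and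
      (end_tendsto.eventually_mem (hV.mem_nhds hyV)))
  refine ⟨N, fun n hn ↦ ?_⟩
  rw [← Module.End.coe_pow]
  exact ⟨_, Set.mem_image_of_mem _ (hN n hn).1, (hN n hn).2⟩

end Kitai

theorem pow_apply_of_apply_eq_smul {R X : Type*} [Semiring R] [AddCommMonoid X] [Module R X]
    {T : Module.End R X} {c : R} {x : X} (hx : T x = c • x) (n : ℕ) : (T ^ n) x = c ^ n • x := by
  induction n with
  | zero => simp
  | succ n ih => rw [pow_succ', Module.End.mul_apply, ih, map_smul, hx, smul_smul, pow_succ]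

section GodefroyShapiro

variable {𝕂 X : Type*} [NormedDivisionRing 𝕂] [AddCommGroup X] [Module 𝕂 X] [TopologicalSpace X]
  [ContinuousSMul 𝕂 X]

theorem tendsto_pow_smul_nhds_zero {c : 𝕂} (hc : ‖c‖ < 1) (x : X) :
    Tendsto (fun n : ℕ ↦ c ^ n • x) atTop (𝓝 0) := by
  simpa using (tendsto_pow_atTop_nhds_zero_of_norm_lt_one hc).smul_const x

variable [ContinuousAdd X]

theorem span_eigenvectors_norm_lt_one_le_stableSubmodule (T : Module.End 𝕂 X) :
    Submodule.span 𝕂 {x : X | ∃ c : 𝕂, ‖c‖ < 1 ∧ T x = c • x} ≤ stableSubmodule T := by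
  rw [Submodule.span_le]
  rintro x ⟨c, hc, hx⟩
  exact (tendsto_pow_smul_nhds_zero hc x).congr fun n ↦ (pow_apply_of_apply_eq_smul hx n).symm

theorem span_eigenvectors_one_lt_norm_le_unstableSubmodule (T : Module.End 𝕂 X) :
    Submodule.span 𝕂 {x : X | ∃ c : 𝕂, 1 < ‖c‖ ∧ T x = c • x} ≤ unstableSubmodule T := by
  rw [Submodule.span_le]
  rintro y ⟨c, hc, hy⟩
  have c_ne_zero : c ≠ 0 := norm_pos_iff.1 (one_pos.trans hc)
  have norm_inv_lt_one : ‖c⁻¹‖ < 1 := by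
    rw [norm_inv]
    exact inv_lt_one_of_one_lt₀ hc
  refine ⟨fun n ↦ c⁻¹ ^ n • y, tendsto_pow_smul_nhds_zero norm_inv_lt_one y, fun n ↦ ?_⟩
  rw [map_smul, pow_apply_of_apply_eq_smul hy, inv_pow, inv_smul_smul₀ (pow_ne_zero n c_ne_zero)]

theorem isMixing_of_dense_span_eigenvectors {T : Module.End 𝕂 X}
    (hlt : Dense (Submodule.span 𝕂 {x : X | ∃ c : 𝕂, ‖c‖ < 1 ∧ T x = c • x} : Set X))
    (hgt : Dense (Submodule.span 𝕂 {x : X | ∃ c : 𝕂, 1 < ‖c‖ ∧ T x = c • x} : Set X)) :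
    IsMixing T :=
  isMixing_of_dense_stableSubmodule_of_dense_unstableSubmodule
    (hlt.mono (span_eigenvectors_norm_lt_one_le_stableSubmodule T))
    (hgt.mono (span_eigenvectors_one_lt_norm_le_unstableSubmodule T))

theorem stmt10_general [BaireSpace X] [SecondCountableTopology X] (T : X →L[𝕂] X)
    (hlt : Dense (Submodule.span 𝕂 {x : X | ∃ c : 𝕂, ‖c‖ < 1 ∧ T x = c • x} : Set X))
    (hgt : Dense (Submodule.span 𝕂 {x : X | ∃ c : 𝕂, 1 < ‖c‖ ∧ T x = c • x} : Set X)) :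
    IsMixing ⇑T ∧ Hypercyclic ⇑T := by
  have mixing : IsMixing ⇑T := isMixing_of_dense_span_eigenvectors (T := T.toLinearMap) hlt hgt
  exact ⟨mixing, mixing.topologicallyTransitive.hypercyclic T.continuous⟩

end GodefroyShapiro

theorem stmt10
    (𝕂 : Type*) [RCLike 𝕂]
    (X : Type*) [NormedAddCommGroup X] [NormedSpace 𝕂 X] [CompleteSpace X]
    [TopologicalSpace.SeparableSpace X]
    (T : X →L[𝕂] X)
    (hlt : Dense (Submodule.span 𝕂 {x : X | ∃ c : 𝕂, ‖c‖ < 1 ∧ T x = c • x} : Set X))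
    (hgt : Dense (Submodule.span 𝕂 {x : X | ∃ c : 𝕂, 1 < ‖c‖ ∧ T x = c • x} : Set X)) :
    IsMixing ⇑T ∧ Hypercyclic ⇑T := by
  have : SecondCountableTopology X := UniformSpace.secondCountable_of_separable X
  exact stmt10_general T hlt hgt
end
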